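/- Let m, n ≥ 1 be integers and let SL(n) denote the group of n×n complex matrices of determinant 1, topologized as a subspace of M_n. There exists a continuous spectrum-shrinking map φ : SL(n) → M_m if and only if n divides m; and when n divides m, every continuous spectrum-shrinking map φ : SL(n) → M_m satisfies k_{φ(X)} = (k_X)^{m/n} for all X ∈ SL(n) (in particular, sp(φ(X)) = sp(X) for all X). -/

import Mathlib

open Matrix

theorem split_aux {ι : Type*} [Fintype ι] (p : Polynomial ℂ) (hp : p.Monic) (l : ι → ℂ)
    (hl : Function.Injective l) (h : ∀ x, p.IsRoot x → ∃ i, l i = x) :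
    p = ∏ i, (Polynomial.X - Polynomial.C (l i)) ^ (p.roots.count (l i)) := by
  classical
  have h1 : (p.roots.map (fun a => Polynomial.X - Polynomial.C a)).prod = p := by
    have := (IsAlgClosed.splits p).eq_prod_roots
    rw [hp.leadingCoeff] at this
    simpa using this.symm
  conv_lhs => rw [← h1]
  rw [Finset.prod_multiset_map_count]
  have h2 : p.roots.toFinset ⊆ Finset.univ.image l := by
    intro x hx
    simp only [Multiset.mem_toFinset, Polynomial.mem_roots', Finset.mem_image, Finset.mem_univ, true_and] at hx ⊢
    exact h x hx.2
  rw [Finset.prod_subset h2, Finset.prod_image (by intro a _ b _ h; exact hl h)]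
  intro x _ hx
  rw [Multiset.mem_toFinset, ← Multiset.count_eq_zero] at hx
  rw [hx, pow_zero]

theorem count_aux {ι : Type*} [Fintype ι] (l : ι → ℂ)
    (hl : Function.Injective l) (a : ι → ℕ) (j : ι) :
    (∏ i, (Polynomial.X - Polynomial.C (l i)) ^ (a i)).roots.count (l j) = a j := by
  classical
  rw [Polynomial.roots_prod _ _ (Finset.prod_ne_zero_iff.2 fun i _ => pow_ne_zero _ (Polynomial.X_sub_C_ne_zero _))]
  rw [Multiset.count_bind, Finset.sum_map_val]
  simp only [Polynomial.roots_pow, Polynomial.roots_X_sub_C, Multiset.count_nsmul, Multiset.count_singleton, hl.eq_iff]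
  simp

theorem cont_eval {U : Type*} [TopologicalSpace U] {m : ℕ} (g : U → Matrix (Fin m) (Fin m) ℂ)
    (hg : Continuous g) (x : ℂ) : Continuous fun u => (g u).charpoly.eval x := by
  simp only [Matrix.eval_charpoly]
  fun_prop

theorem const_aux {ι U : Type*} [Fintype ι] [TopologicalSpace U] [PreconnectedSpace U] {m : ℕ}
    (l : ι → U → ℂ) (hlc : ∀ i, Continuous (l i)) (hl : ∀ u, Function.Injective fun i => l i u)
    (g : U → Matrix (Fin m) (Fin m) ℂ) (hg : Continuous g)
    (hs : ∀ u, ∀ x ∈ spectrum ℂ (g u), ∃ i, l i u = x) :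
    ∃ a : ι → ℕ, ∀ u, (g u).charpoly = ∏ i, (Polynomial.X - Polynomial.C (l i u)) ^ (a i) := by
  classical
  have key : ∀ u, (g u).charpoly = ∏ i, (Polynomial.X - Polynomial.C (l i u)) ^
      ((g u).charpoly.roots.count (l i u)) := fun u =>
    split_aux _ (Matrix.charpoly_monic _) (fun i => l i u) (hl u) fun x hx =>
      hs u x (Matrix.mem_spectrum_iff_isRoot_charpoly.2 hx)
  have hle : ∀ u i, (g u).charpoly.roots.count (l i u) < m + 1 := fun u i => by
    have h1 := Multiset.count_le_card (l i u) (g u).charpoly.roots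
    have h2 := Polynomial.card_roots' (g u).charpoly
    rw [Matrix.charpoly_natDegree_eq_dim, Fintype.card_fin] at h2
    omega
  let A : U → (ι → Fin (m+1)) := fun u i => ⟨_, hle u i⟩
  have hfib : ∀ b, IsClosed (A ⁻¹' {b}) := by
    intro b
    have : A ⁻¹' {b} = ⋂ x : ℂ, {u | (g u).charpoly.eval x = ∏ i, (x - l i u) ^ (b i : ℕ)} := by
      ext u
      simp only [Set.mem_preimage, Set.mem_singleton_iff, Set.mem_iInter, Set.mem_ofPred_eq]
      constructor
      · rintro rfl x
        conv_lhs => rw [key u]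
        simp [Polynomial.eval_prod, A]
      · intro h
        have h3 : (g u).charpoly = ∏ i, (Polynomial.X - Polynomial.C (l i u)) ^ (b i : ℕ) := by
          apply Polynomial.funext
          intro x
          rw [h x]
          simp [Polynomial.eval_prod]
        ext i
        simp only [A]
        rw [h3]
        exact count_aux (fun i => l i u) (hl u) _ i
    rw [this]
    refine isClosed_iInter fun x => isClosed_eq (cont_eval g hg x) ?_
    fun_prop
  have hA : Continuous A := by
    rw [continuous_iff_isClosed]
    intro s _
    rw [← Set.biUnion_preimage_singleton]
    exact s.toFinite.isClosed_biUnion fun b _ => hfib b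
  rcases isEmpty_or_nonempty U with hU | ⟨⟨u0⟩⟩
  · exact ⟨fun _ => 0, fun u => hU.elim u⟩
  · refine ⟨fun i => A u0 i, fun u => ?_⟩
    have : A u0 = A u := PreconnectedSpace.constant ‹_› hA
    rw [this]
    exact key u

/-- charpoly is constant when spectrum is contained in a fixed finite set. -/
theorem const_aux2 {U : Type*} [TopologicalSpace U] [PreconnectedSpace U] {m : ℕ}
    (F : Set ℂ) (hF : F.Finite)
    (g : U → Matrix (Fin m) (Fin m) ℂ) (hg : Continuous g)
    (hs : ∀ u, spectrum ℂ (g u) ⊆ F) (u v : U) : (g u).charpoly = (g v).charpoly := by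
  have := hF.fintype
  obtain ⟨a, ha⟩ := const_aux (ι := F) (fun i _ => (i : ℂ)) (fun i => continuous_const)
    (fun u => Subtype.val_injective) g hg (fun u x hx => ⟨⟨x, hs u hx⟩, rfl⟩)
  rw [ha u, ha v]

theorem spec_finite {n : ℕ} (X : Matrix (Fin n) (Fin n) ℂ) : (spectrum ℂ X).Finite := by
  refine (X.charpoly.roots.toFinset.finite_toSet).subset fun x hx => ?_
  have := Matrix.mem_spectrum_iff_isRoot_charpoly.1 hx
  simpa [Polynomial.mem_roots', (Matrix.charpoly_monic X).ne_zero] using this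

abbrev SLs (n : ℕ) := {X : Matrix (Fin n) (Fin n) ℂ // X.det = 1}

theorem spec_conj {n : ℕ} (S X : Matrix (Fin n) (Fin n) ℂ) (hS : IsUnit S.det) :
    spectrum ℂ (S * X * S⁻¹) = spectrum ℂ X := by
  ext x
  rw [Matrix.mem_spectrum_iff_isRoot_charpoly, Matrix.mem_spectrum_iff_isRoot_charpoly,
    Matrix.charpoly_mul_comm, ← mul_assoc, Matrix.nonsing_inv_mul _ hS, one_mul]

theorem det_conj' {n : ℕ} (S X : Matrix (Fin n) (Fin n) ℂ) (hS : IsUnit S.det) :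
    (S * X * S⁻¹).det = X.det := by
  rw [Matrix.det_mul_comm, ← mul_assoc, Matrix.nonsing_inv_mul _ hS, one_mul]

theorem conj_aux {n m : ℕ} (φ : SLs n → Matrix (Fin m) (Fin m) ℂ) (hφ : Continuous φ)
    (hs : ∀ X, spectrum ℂ (φ X) ⊆ spectrum ℂ X.val) (S : Matrix (Fin n) (Fin n) ℂ)
    (hS : IsUnit S.det) (X Y : SLs n) (hY : Y.val = S * X.val * S⁻¹) :
    (φ Y).charpoly = (φ X).charpoly := by
  let p : Polynomial ℂ := (1 + (Polynomial.X : Polynomial ℂ) • (S - 1).map Polynomial.C :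
    Matrix (Fin n) (Fin n) (Polynomial ℂ)).det
  have hp : ∀ t, p.eval t = (1 + t • (S - 1)).det := by
    intro t
    simp only [p]
    rw [← Polynomial.coe_evalRingHom, RingHom.map_det]
    congr 1
    ext i j
    by_cases h : i = j
    · simp [h]
    · simp [h]
      exact mul_comm _ _
  have hp0 : p ≠ 0 := by
    intro h
    have := hp 0
    simp [h] at this
  have hconn : IsPreconnected {t : ℂ | p.eval t ≠ 0} := by
    have hc : Set.Countable {t : ℂ | p.eval t = 0} := by
      refine ((p.roots.toFinset.finite_toSet).subset fun x hx => ?_).countable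
      simpa [Polynomial.mem_roots', hp0] using hx
    exact (hc.isConnected_compl_of_one_lt_rank (by simp)).isPreconnected
  have := Subtype.preconnectedSpace hconn
  have hu : ∀ t : {t : ℂ | p.eval t ≠ 0}, IsUnit (1 + t.1 • (S - 1)).det := fun t => by
    rw [← hp]; exact (isUnit_iff_ne_zero).2 t.2
  let c : {t : ℂ | p.eval t ≠ 0} → SLs n := fun t =>
    ⟨(1 + t.1 • (S - 1)) * X.val * (1 + t.1 • (S - 1))⁻¹, by rw [det_conj' _ _ (hu t), X.2]⟩
  have hc : Continuous c := by
    refine Continuous.subtype_mk ?_ _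
    refine Continuous.mul (by fun_prop) ?_
    simp only [Matrix.inv_def, Ring.inverse_eq_inv']
    refine Continuous.smul (Continuous.inv₀ (by fun_prop) fun t => (hu t).ne_zero) (by fun_prop)
  have h1 := const_aux2 _ (spec_finite X.val) (fun t => φ (c t)) (hφ.comp hc)
    (fun t => (hs (c t)).trans (spec_conj _ _ (hu t)).le)
    ⟨1, by simp only [Set.mem_ofPred_eq, hp]; simpa using hS.ne_zero⟩ ⟨0, by simp [hp]⟩
  convert h1 using 3
  · apply Subtype.ext; simp [c, hY]
  · apply Subtype.ext; simp [c]

theorem perm_conj {n : ℕ} (σ : Equiv.Perm (Fin n)) (l : Fin n → ℂ) :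
    IsUnit (σ.permMatrix ℂ).det ∧
    diagonal (fun k => l (σ k)) = σ.permMatrix ℂ * diagonal l * (σ.permMatrix ℂ)⁻¹ := by
  have hu : IsUnit (σ.permMatrix ℂ).det := by
    rw [Matrix.det_permutation]
    rcases Int.units_eq_one_or (Equiv.Perm.sign σ) with h | h <;> simp [h]
  refine ⟨hu, ?_⟩
  have : σ.permMatrix ℂ * diagonal l = diagonal (fun k => l (σ k)) * σ.permMatrix ℂ := by
    ext a b
    rw [Matrix.mul_diagonal, Matrix.diagonal_mul]
    by_cases h : σ a = b
    · simp [Equiv.Perm.permMatrix, PEquiv.toMatrix_apply, h]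
    · simp [Equiv.Perm.permMatrix, PEquiv.toMatrix_apply, h, Ne.symm h]
  rw [this, mul_assoc, Matrix.mul_nonsing_inv _ hu, mul_one]

theorem swap_aux {n m : ℕ} (φ : SLs n → Matrix (Fin m) (Fin m) ℂ) (hφ : Continuous φ)
    (hs : ∀ X, spectrum ℂ (φ X) ⊆ spectrum ℂ X.val) (l : Fin n → ℂ) (hl : Function.Injective l)
    (X : SLs n) (hX : X.val = diagonal l) (i j : Fin n) (hij : i ≠ j) :
    (φ X).charpoly.roots.count (l i) = (φ X).charpoly.roots.count (l j) := by
  classical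
  have hprod : ∏ k, l k = 1 := by rw [← Matrix.det_diagonal, ← hX, X.2]
  have hne : ∀ k, l k ≠ 0 := fun k h => by
    rw [Finset.prod_eq_zero (Finset.mem_univ k) h] at hprod
    exact zero_ne_one hprod
  let L : Fin n → ℂ → ℂ := fun k z =>
    l k * (if k = i then z / l i else 1) * (if k = j then l i / z else 1)
  have Li : ∀ z, L i z = z := fun z => by
    simp only [L, if_true, if_neg hij, mul_one]; field_simp [hne i]
  have Lj : ∀ z, L j z = l j * l i / z := fun z => by
    simp only [L, if_true, if_neg hij.symm, mul_one]; ring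
  have Lk : ∀ k z, k ≠ i → k ≠ j → L k z = l k := fun k z h1 h2 => by
    simp [L, h1, h2]
  let B : Set ℂ := {0} ∪ {z | z ^ 2 = l j * l i} ∪ Set.range l ∪ Set.range (fun k => l j * l i / l k)
  have hB : B.Countable := by
    refine Set.Finite.countable (((Set.finite_singleton _).union ?_).union (Set.finite_range _) |>.union
      (Set.finite_range _))
    have := (Polynomial.nthRoots 2 (l j * l i)).toFinset.finite_toSet
    refine this.subset fun z hz => ?_
    simpa [Polynomial.mem_nthRoots] using hz
  let B' : Set ℂ := B \ {l i, l j}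
  have hB' : B'.Countable := hB.mono Set.diff_subset
  have hconn : IsPreconnected B'ᶜ :=
    (hB'.isConnected_compl_of_one_lt_rank (by simp)).isPreconnected
  have := Subtype.preconnectedSpace hconn
  have mem : ∀ z : (B'ᶜ : Set ℂ), z.1 ∉ B ∨ z.1 = l i ∨ z.1 = l j := fun z => by
    have := z.2
    simp only [B', Set.mem_compl_iff, Set.mem_diff, Set.mem_insert_iff, Set.mem_singleton_iff] at this
    tauto
  have z0 : ∀ z : (B'ᶜ : Set ℂ), z.1 ≠ 0 := fun z => by
    rcases mem z with h | h | h
    · intro h0; exact h (by simp [B, h0])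
    · rw [h]; exact hne _
    · rw [h]; exact hne _
  have Lli : ∀ k, L k (l i) = l k := fun k => by
    simp [L, hne i]
  have Llj : ∀ k, L k (l j) = l (Equiv.swap i j k) := fun k => by
    by_cases h1 : k = i
    · subst h1; rw [Li]; simp
    by_cases h2 : k = j
    · subst h2; rw [Lj]; simp [hne k]
    rw [Lk _ _ h1 h2, Equiv.swap_apply_of_ne_of_ne h1 h2]
  have Linj : ∀ z : (B'ᶜ : Set ℂ), Function.Injective fun k => L k z.1 := by
    intro z
    rcases mem z with h | h | h
    · have hz := z0 z
      simp only [B, Set.mem_union, Set.mem_singleton_iff, Set.mem_ofPred_eq, Set.mem_range, not_or,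
        not_exists] at h
      obtain ⟨⟨⟨-, hsq⟩, hr⟩, hr2⟩ := h
      have e1 : ∀ k, k ≠ i → L i z.1 ≠ L k z.1 := by
        intro k hk he
        rw [Li] at he
        by_cases h2 : k = j
        · subst h2; rw [Lj, eq_div_iff hz] at he; exact hsq (by rw [pow_two]; exact he)
        · rw [Lk _ _ hk h2] at he; exact hr k he.symm
      have e2 : ∀ k, k ≠ i → k ≠ j → L j z.1 ≠ L k z.1 := by
        intro k hk hk2 he
        rw [Lj, Lk _ _ hk hk2, div_eq_iff hz] at he
        exact hr2 k (by rw [div_eq_iff (hne k), he, mul_comm])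
      intro a b hab
      by_contra hne'
      by_cases a1 : a = i
      · subst a1; exact e1 b (Ne.symm hne') hab
      by_cases b1 : b = i
      · subst b1; exact e1 a hne' hab.symm
      by_cases a2 : a = j
      · subst a2; exact e2 b b1 (Ne.symm hne') hab
      by_cases b2 : b = j
      · subst b2; exact e2 a a1 hne' hab.symm
      simp only [Lk _ _ a1 a2, Lk _ _ b1 b2] at hab
      exact hne' (hl hab)
    · simp only [h, Lli]; exact hl
    · simp only [h, Llj]; exact hl.comp (Equiv.injective _)
  have hLc : ∀ k, Continuous fun z : (B'ᶜ : Set ℂ) => L k z.1 := by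
    intro k
    simp only [L]
    refine Continuous.mul (Continuous.mul continuous_const ?_) ?_
    · split_ifs <;> fun_prop
    · split_ifs
      · exact continuous_const.div continuous_subtype_val z0
      · fun_prop
  have hLp : ∀ z : (B'ᶜ : Set ℂ), (diagonal fun k => L k z.1).det = 1 := by
    intro z
    rw [Matrix.det_diagonal]
    simp only [L, Finset.prod_mul_distrib, hprod, Finset.prod_ite_eq', Finset.mem_univ, if_true]
    have := z0 z
    have := hne i
    field_simp
  let c : (B'ᶜ : Set ℂ) → SLs n := fun z => ⟨diagonal fun k => L k z.1, hLp z⟩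
  have hc : Continuous c := by
    refine Continuous.subtype_mk ?_ _
    exact Continuous.matrix_diagonal (continuous_pi hLc)
  obtain ⟨a, ha⟩ := const_aux (fun k (z : (B'ᶜ : Set ℂ)) => L k z.1) hLc Linj (fun z => φ (c z))
    (hφ.comp hc) (fun z x hx => by
      have := hs _ hx
      simpa [c, spectrum_diagonal] using this)
  have mi : l i ∈ B'ᶜ := by simp [B']
  have mj : l j ∈ B'ᶜ := by simp [B']
  have h1 := ha ⟨l i, mi⟩
  have h2 := ha ⟨l j, mj⟩
  have c1 : c ⟨l i, mi⟩ = X := Subtype.ext (by simp [c, Lli, hX])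
  rw [c1] at h1
  simp only [Lli] at h1
  obtain ⟨hu, hp⟩ := perm_conj (Equiv.swap i j) l
  rw [conj_aux φ hφ hs _ hu X _ (by simp only [c, Llj]; rw [hp, hX])] at h2
  simp only [Llj] at h2
  have k1 : (φ X).charpoly.roots.count (l i) = a i := by rw [h1]; exact count_aux l hl a i
  have k2 : (φ X).charpoly.roots.count (l j) = a i := by
    rw [h2]
    have := count_aux (fun k => l (Equiv.swap i j k)) (hl.comp (Equiv.injective _)) a i
    simpa using this
  rw [k1, k2]

theorem diag_aux {n m : ℕ} (hn : 1 ≤ n) (φ : SLs n → Matrix (Fin m) (Fin m) ℂ) (hφ : Continuous φ)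
    (hs : ∀ X, spectrum ℂ (φ X) ⊆ spectrum ℂ X.val) (l : Fin n → ℂ) (hl : Function.Injective l)
    (X : SLs n) (hX : X.val = diagonal l) :
    n ∣ m ∧ (φ X).charpoly = X.val.charpoly ^ (m / n) := by
  have h1 := split_aux (φ X).charpoly (Matrix.charpoly_monic _) l hl (fun x hx => by
    have := hs X (Matrix.mem_spectrum_iff_isRoot_charpoly.2 hx)
    simpa [hX, spectrum_diagonal] using this)
  let i0 : Fin n := ⟨0, hn⟩
  have h2 : ∀ k, (φ X).charpoly.roots.count (l k) = (φ X).charpoly.roots.count (l i0) := by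
    intro k
    by_cases h : k = i0
    · rw [h]
    · exact swap_aux φ hφ hs l hl X hX k i0 h
  simp only [h2] at h1
  rw [Finset.prod_pow, ← Matrix.charpoly_diagonal, ← hX] at h1
  have h3 := congrArg Polynomial.natDegree h1
  rw [Polynomial.natDegree_pow, Matrix.charpoly_natDegree_eq_dim, Matrix.charpoly_natDegree_eq_dim,
    Fintype.card_fin, Fintype.card_fin] at h3
  have h4 : n ∣ m := Dvd.intro_left _ h3.symm
  refine ⟨h4, ?_⟩
  have h5 : m / n = (φ X).charpoly.roots.count (l i0) := by
    exact Nat.div_eq_of_eq_mul_left hn h3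
  rw [h5]
  exact h1

theorem diag_aux2 {n m : ℕ} (hn : 1 ≤ n) (φ : SLs n → Matrix (Fin m) (Fin m) ℂ) (hφ : Continuous φ)
    (hs : ∀ X, spectrum ℂ (φ X) ⊆ spectrum ℂ X.val) (l : Fin n → ℂ)
    (X : SLs n) (hX : X.val = diagonal l) :
    n ∣ m ∧ (φ X).charpoly = X.val.charpoly ^ (m / n) := by
  have hprod : ∏ k, l k = 1 := by rw [← Matrix.det_diagonal, ← hX, X.2]
  have hne : ∀ k, l k ≠ 0 := fun k h => by
    rw [Finset.prod_eq_zero (Finset.mem_univ k) h] at hprod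
    exact zero_ne_one hprod
  let d : Fin n → ℝ := fun i => n * (i : ℝ) - ∑ j : Fin n, (j : ℝ)
  have hd : ∑ i, d i = 0 := by
    simp [d, Finset.sum_sub_distrib, ← Finset.mul_sum]
  have hdi : Function.Injective d := by
    intro a b hab
    have hn' : (n : ℝ) ≠ 0 := by positivity
    have : (n : ℝ) * (a : ℝ) = n * (b : ℝ) := by simpa [d] using hab
    have := mul_left_cancel₀ hn' this
    exact Fin.ext (by exact_mod_cast this)
  let L : Fin n → ℝ → ℂ := fun k t => l k * (Real.exp (t * d k) : ℂ)
  have hdet : ∀ t, (diagonal fun k => L k t).det = 1 := by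
    intro t
    rw [Matrix.det_diagonal]
    simp only [L, Finset.prod_mul_distrib, hprod, one_mul]
    rw [← Complex.ofReal_prod, ← Real.exp_sum, ← Finset.mul_sum, hd]
    simp
  let c : ℝ → SLs n := fun t => ⟨diagonal fun k => L k t, hdet t⟩
  have hc : Continuous c := by
    refine Continuous.subtype_mk ?_ _
    refine Continuous.matrix_diagonal (continuous_pi fun k => ?_)
    simp only [L]
    fun_prop
  let bad : Set ℝ := ⋃ p : Fin n × Fin n, {t | p.1 ≠ p.2 ∧ L p.1 t = L p.2 t}
  have hbad : bad.Countable := by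
    refine Set.countable_iUnion fun p => Set.Subsingleton.countable ?_
    rintro s ⟨hp, hs1⟩ t ⟨-, ht1⟩
    have hs2 := congrArg norm hs1
    have ht2 := congrArg norm ht1
    simp only [L, norm_mul, Complex.norm_real, Real.norm_eq_abs, Real.abs_exp] at hs2 ht2
    have p1 : 0 < ‖l p.1‖ := norm_pos_iff.2 (hne _)
    have p2 : 0 < ‖l p.2‖ := norm_pos_iff.2 (hne _)
    have hs3 := congrArg Real.log hs2
    have ht3 := congrArg Real.log ht2
    rw [Real.log_mul p1.ne' (Real.exp_pos _).ne', Real.log_mul p2.ne' (Real.exp_pos _).ne',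
      Real.log_exp, Real.log_exp] at hs3 ht3
    have h4 : (s - t) * (d p.1 - d p.2) = 0 := by linarith
    rcases mul_eq_zero.1 h4 with h | h
    · linarith
    · exact absurd (hdi (sub_eq_zero.1 h)) hp
  have hgood : ∀ t ∈ badᶜ, n ∣ m ∧ (φ (c t)).charpoly = (c t).val.charpoly ^ (m / n) := by
    intro t ht
    refine diag_aux hn φ hφ hs (fun k => L k t) ?_ (c t) rfl
    intro a b hab
    by_contra hne'
    exact ht (Set.mem_iUnion.2 ⟨(a, b), hne', hab⟩)
  have hdense : Dense badᶜ := hbad.dense_compl ℝ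
  obtain ⟨t0, ht0⟩ := hdense.nonempty
  refine ⟨(hgood t0 ht0).1, ?_⟩
  have hX0 : c 0 = X := Subtype.ext (by simp [c, L, hX])
  apply Polynomial.funext
  intro x
  have hcl : IsClosed {t : ℝ | (φ (c t)).charpoly.eval x = ((c t).val.charpoly ^ (m / n)).eval x} := by
    simp only [Polynomial.eval_pow]
    exact isClosed_eq (cont_eval _ (hφ.comp hc) x)
      ((cont_eval _ (continuous_subtype_val.comp hc) x).pow _)
  have := hcl.closure_subset_iff.2 (fun t ht => by
    change _ = _
    rw [(hgood t ht).2]) (hdense 0)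
  rw [← hX0]
  exact this

theorem triang_aux : ∀ (n : ℕ) (V : Type) [AddCommGroup V] [Module ℂ V] [FiniteDimensional ℂ V]
    (_ : Module.finrank ℂ V = n) (f : V →ₗ[ℂ] V),
    ∃ b : Module.Basis (Fin n) ℂ V, ∀ i j, i < j → b.repr (f (b j)) i = 0 := by
  intro n
  induction n with
  | zero =>
    intro V _ _ _ hV f
    exact ⟨Module.finBasisOfFinrankEq ℂ V hV, fun i => i.elim0⟩
  | succ n ih =>
    intro V _ _ _ hV f
    have : Nontrivial V := Module.nontrivial_of_finrank_pos (R := ℂ) (by omega)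
    obtain ⟨μ, hμ⟩ := Module.End.exists_eigenvalue f
    have hr : LinearMap.range (f - μ • (1 : V →ₗ[ℂ] V)) < ⊤ := by
      rw [lt_top_iff_ne_top]
      intro h
      have hi := LinearMap.injective_iff_surjective.2 (LinearMap.range_eq_top.1 h)
      obtain ⟨v, hv⟩ := hμ.exists_hasEigenvector
      apply hv.2
      apply hi
      simp [hv.apply_eq_smul]
    obtain ⟨g, hg0, hg⟩ := Submodule.exists_le_ker_of_lt_top _ hr
    have hinv : ∀ x ∈ LinearMap.ker g, f x ∈ LinearMap.ker g := by
      intro x hx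
      have h1 : (f - μ • (1 : V →ₗ[ℂ] V)) x ∈ LinearMap.ker g := hg ⟨x, rfl⟩
      have h2 := Submodule.add_mem _ h1 (Submodule.smul_mem _ μ hx)
      simpa using h2
    obtain ⟨y, hy⟩ : ∃ y, g y ≠ 0 := by
      by_contra h
      push Not at h
      exact hg0 (LinearMap.ext h)
    have hfr : Module.finrank ℂ (LinearMap.ker g) = n := by
      have h1 := LinearMap.finrank_range_add_finrank_ker g
      have h2 : LinearMap.range g = ⊤ := LinearMap.range_eq_top.2 (LinearMap.surjective hg0)
      rw [h2, finrank_top, Module.finrank_self] at h1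
      omega
    obtain ⟨b, hb⟩ := ih (LinearMap.ker g) hfr (f.restrict hinv)
    have hli : ∀ (c : ℂ), ∀ x ∈ LinearMap.ker g, c • y + x = 0 → c = 0 := by
      intro c x hx h
      have := congrArg g h
      rw [map_add, LinearMap.mem_ker.1 hx] at this
      simpa [hy] using this
    have hsp : ∀ z : V, ∃ c : ℂ, z + c • y ∈ LinearMap.ker g := by
      intro z
      refine ⟨-(g z / g y), ?_⟩
      simp [hy]
    let b' := Module.Basis.mkFinCons y b hli hsp
    have hb' : ∀ k : Fin n, b' k.succ = (b k : V) := fun k => by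
      simp [b', Module.Basis.coe_mkFinCons]
    refine ⟨b', fun i j hij => ?_⟩
    obtain ⟨j, rfl⟩ := Fin.exists_succ_eq.2 (Fin.ne_zero_of_lt hij)
    have h1 : f (b' j.succ) = ∑ k, b.repr (f.restrict hinv (b j)) k • b' k.succ := by
      have := congrArg Subtype.val (b.sum_repr (f.restrict hinv (b j)))
      simp only [hb']
      have h0 : ((f.restrict hinv (b j) : LinearMap.ker g) : V) = f (b j) := rfl
      rw [← h0, ← this]
      push_cast
      rfl
    rw [h1]
    simp only [map_sum, map_smul, Module.Basis.repr_self, Finsupp.coe_finset_sum, Finset.sum_apply,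
      Finsupp.smul_apply, smul_eq_mul]
    refine Finset.sum_eq_zero fun k _ => ?_
    by_cases h : k.succ = i
    · rw [hb k j (by rw [← h] at hij; simpa using hij), zero_mul]
    · rw [Finsupp.single_eq_of_ne (Ne.symm h), mul_zero]

theorem triang {n : ℕ} (A : Matrix (Fin n) (Fin n) ℂ) :
    ∃ S T : Matrix (Fin n) (Fin n) ℂ, IsUnit S.det ∧ (∀ i j, i < j → T i j = 0) ∧
      A = S * T * S⁻¹ := by
  obtain ⟨b, hb⟩ := triang_aux n (Fin n → ℂ) (by simp) (Matrix.toLin' A)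
  let e := Pi.basisFun ℂ (Fin n)
  have h1 : e.toMatrix b * b.toMatrix e = 1 := Module.Basis.toMatrix_mul_toMatrix_flip _ _
  have h2 := basis_toMatrix_mul_linearMap_toMatrix_mul_basis_toMatrix e b e b (Matrix.toLin' A)
  refine ⟨e.toMatrix b, LinearMap.toMatrix b b (Matrix.toLin' A), ?_, ?_, ?_⟩
  · exact (Matrix.isUnit_iff_isUnit_det _).1 (IsUnit.of_mul_eq_one _ h1)
  · intro i j hij
    rw [LinearMap.toMatrix_apply]
    exact hb i j hij
  · rw [Matrix.inv_eq_right_inv h1, h2]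
    simp [e, LinearMap.toMatrix_eq_toMatrix']

theorem lower_charpoly {n : ℕ} (T : Matrix (Fin n) (Fin n) ℂ) (hT : ∀ i j, i < j → T i j = 0) :
    T.charpoly = (diagonal fun i => T i i).charpoly := by
  rw [Matrix.charpoly_diagonal, ← Matrix.charpoly_transpose]
  exact Matrix.charpoly_of_upperTriangular _ (fun i j h => hT j i h)

theorem lower_det {n : ℕ} (T : Matrix (Fin n) (Fin n) ℂ) (hT : ∀ i j, i < j → T i j = 0) :
    T.det = ∏ i, T i i := 
  Matrix.det_of_lowerTriangular _ (fun i j h => hT i j h)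

theorem main_aux {n m : ℕ} (hn : 1 ≤ n) (φ : SLs n → Matrix (Fin m) (Fin m) ℂ) (hφ : Continuous φ)
    (hs : ∀ X, spectrum ℂ (φ X) ⊆ spectrum ℂ X.val) (X : SLs n) :
    n ∣ m ∧ (φ X).charpoly = X.val.charpoly ^ (m / n) := by
  obtain ⟨S, T, hS, hT, hA⟩ := triang X.val
  have hTd : ∏ i, T i i = 1 := by
    rw [← lower_det T hT, ← X.2, hA, det_conj' _ _ hS]
  let C : ℂ → Matrix (Fin n) (Fin n) ℂ := fun s =>
    diagonal (fun i => T i i) + s • (T - diagonal fun i => T i i)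
  have hC : ∀ s i j, i < j → C s i j = 0 := by
    intro s i j h
    simp [C, hT i j h, h.ne]
  have hCd : ∀ s i, C s i i = T i i := by
    intro s i
    simp [C]
  let c : ℂ → SLs n := fun s => ⟨C s, by
    rw [lower_det _ (hC s)]; simp only [hCd]; exact hTd⟩
  have hc : Continuous c := by
    refine Continuous.subtype_mk ?_ _
    simp only [C]
    fun_prop
  have hch : ∀ s, (C s).charpoly = (diagonal fun i => T i i).charpoly := by
    intro s
    rw [lower_charpoly _ (hC s)]
    simp only [hCd]
  have h1 := const_aux2 _ (spec_finite (diagonal fun i => T i i)) (fun t => φ (c t)) (hφ.comp hc)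
    (fun t => (hs (c t)).trans (fun x hx => by
      rw [Matrix.mem_spectrum_iff_isRoot_charpoly] at hx ⊢
      rwa [← hch t])) 1 0
  have h2 := diag_aux2 hn φ hφ hs (fun i => T i i) (c 0) (by simp [c, C])
  have h3 := conj_aux φ hφ hs S hS (c 1) X (by rw [hA]; simp [c, C])
  refine ⟨h2.1, ?_⟩
  rw [h3, h1, h2.2]
  congr 1
  change (C 0).charpoly = _
  rw [hch 0, ← lower_charpoly T hT, hA, Matrix.charpoly_mul_comm, ← mul_assoc,
    Matrix.nonsing_inv_mul _ hS, one_mul]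

theorem exist_aux (n k : ℕ) : ∃ φ : SLs n → Matrix (Fin (n * k)) (Fin (n * k)) ℂ,
    Continuous φ ∧ ∀ X, spectrum ℂ (φ X) ⊆ spectrum ℂ X.val := by
  let e : Fin n × Fin k ≃ Fin (n * k) := finProdFinEquiv
  refine ⟨fun X => Matrix.reindex e e (blockDiagonal fun _ : Fin k => X.val), ?_, ?_⟩
  · refine Continuous.matrix_reindex ?_ _ _
    refine Continuous.matrix_blockDiagonal ?_
    fun_prop
  · intro X x hx
    rw [Matrix.mem_spectrum_iff_isRoot_charpoly] at hx ⊢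
    rw [Matrix.charpoly_reindex, Polynomial.IsRoot, Matrix.eval_charpoly] at hx
    have : scalar (Fin n × Fin k) x - blockDiagonal (fun _ : Fin k => X.val) =
        blockDiagonal (fun _ : Fin k => scalar (Fin n) x - X.val) := by
      ext ⟨a, b⟩ ⟨c, d⟩
      by_cases h : b = d <;> by_cases h' : a = c <;> simp [blockDiagonal_apply, h, h', Matrix.diagonal_apply]
    rw [this, Matrix.det_blockDiagonal] at hx
    rw [Polynomial.IsRoot, Matrix.eval_charpoly]
    obtain ⟨_, _, h⟩ := Finset.prod_eq_zero_iff.1 hx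
    exact h

/-- For integers `m, n ≥ 1`, there exists a continuous spectrum-shrinking
map `φ : SL(n) → M_m` iff `n ∣ m`; and when `n ∣ m`, every continuous spectrum-shrinking
`φ : SL(n) → M_m` satisfies `k_{φ(X)} = (k_X)^(m/n)` (in particular it preserves spectra). -/
theorem exists_continuous_spectrum_shrinker_SLn_iff (n m : ℕ) (hn : 1 ≤ n) (hm : 1 ≤ m) :
    ((∃ φ : {X : Matrix (Fin n) (Fin n) ℂ // X.det = 1} → Matrix (Fin m) (Fin m) ℂ,
        Continuous φ ∧ ∀ X, spectrum ℂ (φ X) ⊆ spectrum ℂ X.val) ↔ n ∣ m) ∧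
    (n ∣ m → ∀ φ : {X : Matrix (Fin n) (Fin n) ℂ // X.det = 1} → Matrix (Fin m) (Fin m) ℂ,
        Continuous φ → (∀ X, spectrum ℂ (φ X) ⊆ spectrum ℂ X.val) →
        ∀ X, (φ X).charpoly = X.val.charpoly ^ (m / n) ∧
          spectrum ℂ (φ X) = spectrum ℂ X.val) := by
  refine ⟨⟨?_, ?_⟩, ?_⟩
  · rintro ⟨φ, hφ, hs⟩
    exact (main_aux hn φ hφ hs ⟨1, Matrix.det_one⟩).1
  · rintro ⟨k, rfl⟩
    exact exist_aux n k
  · intro hd φ hφ hs X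
    have h := (main_aux hn φ hφ hs X).2
    refine ⟨h, ?_⟩
    have hne : m / n ≠ 0 := (Nat.div_pos (Nat.le_of_dvd hm hd) hn).ne'
    ext x
    rw [Matrix.mem_spectrum_iff_isRoot_charpoly, Matrix.mem_spectrum_iff_isRoot_charpoly, h]
    simp [Polynomial.IsRoot, hne]
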